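/- Let R be a commutative semiring. Every projective R-module is flat. -/

import Mathlib

/-!
Over a commutative semiring, every projective module is flat.
-/

universe u

open TensorProduct

/-- `M` is flat over the commutative semiring `R`: tensoring with `M` preserves
equalizers (hence all finite limits). -/
def IsSemiflat (R : Type u) [CommSemiring R] (M : Type u) [AddCommMonoid M] [Module R M] : Prop :=
  ∀ (N P : Type u) [AddCommMonoid N] [AddCommMonoid P] [Module R N] [Module R P]
    (f g : N →ₗ[R] P),
    Function.Injective (LinearMap.lTensor M (LinearMap.eqLocus f g).subtype) ∧
    LinearMap.range (LinearMap.lTensor M (LinearMap.eqLocus f g).subtype) =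
      LinearMap.eqLocus (LinearMap.lTensor M f) (LinearMap.lTensor M g)

/-!
For a free module `ι →₀ R`, the natural isomorphism `(ι →₀ R) ⊗ N ≃ (ι →₀ N)` turns tensoring
into applying a map coordinatewise, and a finitely supported family lies in the equalizer of the
coordinatewise maps exactly when each coordinate lies in the equalizer (`isSemiflat_finsupp`).
Flatness passes to retracts, because `rTensor` by the section and the retraction commutes with
`lTensor` (`IsSemiflat.of_retract`). A projective module is a retract of a free one.
-/

/-- Naturality in `N` of the isomorphism `(ι →₀ R) ⊗ N ≃ (ι →₀ N)`. -/
lemma finsuppScalarLeft_lTensor (R : Type u) [CommSemiring R] (ι : Type u) [DecidableEq ι]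
    {N P : Type u} [AddCommMonoid N] [AddCommMonoid P] [Module R N] [Module R P]
    (f : N →ₗ[R] P) (t : (ι →₀ R) ⊗[R] N) (i : ι) :
    TensorProduct.finsuppScalarLeft R P ι (LinearMap.lTensor (ι →₀ R) f t) i =
      f (TensorProduct.finsuppScalarLeft R N ι t i) := by
  induction t with
  | zero => simp
  | tmul a n => simp [TensorProduct.finsuppScalarLeft_apply_tmul_apply]
  | add x y hx hy => simp only [map_add, Finsupp.add_apply, hx, hy]

lemma lTensor_subtype_range_le (R : Type u) [CommSemiring R] (M : Type u) [AddCommMonoid M]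
    [Module R M] {N P : Type u} [AddCommMonoid N] [AddCommMonoid P] [Module R N] [Module R P]
    (f g : N →ₗ[R] P) :
    LinearMap.range (LinearMap.lTensor M (LinearMap.eqLocus f g).subtype) ≤
      LinearMap.eqLocus (LinearMap.lTensor M f) (LinearMap.lTensor M g) := by
  rintro _ ⟨u, rfl⟩
  have h : f ∘ₗ (LinearMap.eqLocus f g).subtype = g ∘ₗ (LinearMap.eqLocus f g).subtype :=
    LinearMap.ext fun x => x.2
  rw [LinearMap.mem_eqLocus, ← LinearMap.lTensor_comp_apply, ← LinearMap.lTensor_comp_apply, h]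

lemma isSemiflat_finsupp (R : Type u) [CommSemiring R] (ι : Type u) :
    IsSemiflat R (ι →₀ R) := by
  classical
  intro N P _ _ _ _ f g
  refine ⟨fun x y hxy => ?_, le_antisymm (lTensor_subtype_range_le R _ f g) fun t ht => ?_⟩
  · apply (TensorProduct.finsuppScalarLeft R (LinearMap.eqLocus f g) ι).injective
    ext i
    have h := DFunLike.congr_fun (congrArg (TensorProduct.finsuppScalarLeft R N ι) hxy) i
    rwa [finsuppScalarLeft_lTensor, finsuppScalarLeft_lTensor] at h
  · have hi (i : ι) : TensorProduct.finsuppScalarLeft R N ι t i ∈ LinearMap.eqLocus f g := by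
      rw [LinearMap.mem_eqLocus] at ht ⊢
      rw [← finsuppScalarLeft_lTensor, ← finsuppScalarLeft_lTensor, ht]
    let v : ι →₀ LinearMap.eqLocus f g :=
      Finsupp.onFinset (TensorProduct.finsuppScalarLeft R N ι t).support (fun i => ⟨_, hi i⟩)
        fun i h => Finsupp.mem_support_iff.2 fun h0 => h (Subtype.ext h0)
    refine ⟨(TensorProduct.finsuppScalarLeft R _ ι).symm v, ?_⟩
    apply (TensorProduct.finsuppScalarLeft R N ι).injective
    ext i
    rw [finsuppScalarLeft_lTensor, LinearEquiv.apply_symm_apply]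
    rfl

lemma IsSemiflat.of_retract {R : Type u} [CommSemiring R] {M F : Type u} [AddCommMonoid M]
    [Module R M] [AddCommMonoid F] [Module R F] (hF : IsSemiflat R F)
    (s : M →ₗ[R] F) (p : F →ₗ[R] M) (hps : p ∘ₗ s = LinearMap.id) : IsSemiflat R M := by
  intro N P _ _ _ _ f g
  have comm {A B K L : Type u} [AddCommMonoid A] [Module R A] [AddCommMonoid B] [Module R B]
      [AddCommMonoid K] [Module R K] [AddCommMonoid L] [Module R L]
      (a : A →ₗ[R] B) (k : K →ₗ[R] L) (t : A ⊗[R] K) :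
      LinearMap.rTensor L a (LinearMap.lTensor A k t) =
        LinearMap.lTensor B k (LinearMap.rTensor K a t) := by
    rw [← LinearMap.comp_apply, ← LinearMap.comp_apply, LinearMap.rTensor_comp_lTensor,
      LinearMap.lTensor_comp_rTensor]
  have retr (K : Type u) [AddCommMonoid K] [Module R K] (t : M ⊗[R] K) :
      LinearMap.rTensor K p (LinearMap.rTensor K s t) = t := by
    rw [← LinearMap.rTensor_comp_apply, hps, LinearMap.rTensor_id_apply]
  obtain ⟨hinj, hrange⟩ := hF N P f g
  refine ⟨fun x y hxy => ?_, le_antisymm (lTensor_subtype_range_le R M f g) fun t ht => ?_⟩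
  · rw [← retr _ x, ← retr _ y]
    congr 1
    apply hinj
    rw [← comm, ← comm, hxy]
  · have hs : LinearMap.rTensor N s t ∈
        LinearMap.eqLocus (LinearMap.lTensor F f) (LinearMap.lTensor F g) := by
      rw [LinearMap.mem_eqLocus] at ht ⊢
      rw [← comm, ← comm, ht]
    rw [← hrange] at hs
    obtain ⟨u, hu⟩ := hs
    exact ⟨LinearMap.rTensor _ p u, by rw [← comm, hu, retr]⟩

/-- Projective modules over a commutative semiring are flat. -/
theorem isSemiflat_of_projective (R : Type u) [CommSemiring R]
    (M : Type u) [AddCommMonoid M] [Module R M] (hM : Module.Projective R M) :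
    IsSemiflat R M := by
  obtain ⟨s, hs⟩ := Module.projective_def'.1 hM
  exact (isSemiflat_finsupp R M).of_retract s _ hs
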